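/- The integral 4 ∫₀^∞ arctan(x)/(e^{2πx} + 1) dx equals −2 + 3·log 2. -/

import Mathlib

open Real MeasureTheory Filter

/-- Hurwitz zeta function ζ(s, a) for real a > 0, via analytic continuation. -/
noncomputable def hurwitzZetaReal (s : ℂ) (a : ℝ) : ℂ :=
  HurwitzZeta.hurwitzZeta (a : UnitAddCircle) s -
    ∑ k ∈ Finset.range (⌈a⌉₊ - 1), ((a - (⌈a⌉₊ - 1) + k : ℝ) : ℂ) ^ (-s)

/-- ζ'(-1, a): derivative of the Hurwitz zeta function w.r.t. s at s = -1. -/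
noncomputable def hurwitzZetaDerivNegOne (a : ℝ) : ℂ :=
  deriv (fun s => hurwitzZetaReal s a) (-1)

/-- Logarithm of the Glaisher–Kinkelin constant: log A = 1/12 - ζ'(-1). -/
noncomputable def logA : ℂ := 1 / 12 - deriv riemannZeta (-1)

/-- log G(z+1) for z > 0, via log G(z+1) = z log Γ(z) + ζ'(-1) - ζ'(-1, z). -/
noncomputable def logBarnesG1p (z : ℝ) : ℂ :=
  z * Real.log (Real.Gamma z) + deriv riemannZeta (-1) - hurwitzZetaDerivNegOne z

/-- log G(x) for x > 0, via the recurrence G(z+1) = Γ(z) G(z) on (0, 1]. -/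
noncomputable def logBarnesG (x : ℝ) : ℂ :=
  if x ≤ 1 then logBarnesG1p x - Real.log (Real.Gamma x) else logBarnesG1p (x - 1)

/-- The Barnes G-function (for positive real argument). -/
noncomputable def barnesG (x : ℝ) : ℂ := Complex.exp (logBarnesG x)

/-- The digamma function ψ = (log Γ)'. -/
noncomputable def digamma (x : ℝ) : ℝ := deriv (fun t => Real.log (Real.Gamma t)) x

/-- The trigamma function ψ⁽¹⁾ = (log Γ)''. -/
noncomputable def trigamma (x : ℝ) : ℝ :=
  deriv (deriv (fun t => Real.log (Real.Gamma t))) x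

/-- The Clausen function Cl₂(x) = ∑_{k ≥ 1} sin(k x) / k². -/
noncomputable def clausen2 (x : ℝ) : ℝ := ∑' k : ℕ, Real.sin ((k + 1) * x) / (k + 1) ^ 2

/-- Catalan's constant. -/
noncomputable def catalanConst : ℝ := ∑' k : ℕ, (-1 : ℝ) ^ k / (2 * (k : ℝ) + 1) ^ 2

/-!
For `a > 0`, write `arctan (x / a) = ∫₀^∞ e^{-at} sin (xt) / t dt`. By Fubini,
`2 ∫₀^∞ arctan (x / a) / (e^{2πx} + 1) dx` becomes the integral of `e^{-at} K(t) / t`, where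
`K(t) = 1 / t - 1 / (2 sinh (t / 2))` is twice the sine transform of `1 / (e^{2πx} + 1)`, computed
from a geometric series in `e^{-2πx}` and the partial fraction expansion of `1 / sinh`.

Expand `e^{-at} = ∑ e^{-(a+n)t} (1 - e^{-t})`. By Frullani's integral, the `n`-th term integrates to
the midpoint-rule defect `log (m + 1/2) - ∫_m^{m+1} log` at `m = a + n`. These defects are
nonnegative because `K` is, and Stirling's formula together with Euler's limit for `Γ` sums them to
`a log a - a + log (2π) / 2 - log Γ(a + 1/2)`. The theorem is the case `a = 1`.
-/

open scoped Topology

/-- The kernel in the Binet-type formula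
`log Γ(a + 1/2) = a log a - a + log (2π) / 2 - ∫₀^∞ e^{-at} K(t) / t dt`.
The formula only uses `t > 0`; the value at `0` is the junk value `0`, which is also the limit. -/
noncomputable def binetKernel (t : ℝ) : ℝ := 1 / t - 1 / (2 * sinh (t / 2))

theorem hasSum_neg_one_pow_mul {R : Type*} [Ring R] [TopologicalSpace R] [IsTopologicalAddGroup R]
    {f : ℕ → R} {s o : R} (hf : HasSum f s) (hodd : HasSum (fun k ↦ f (2 * k + 1)) o) :
    HasSum (fun n ↦ (-1) ^ n * f n) (s - 2 * o) := by
  have hinj : Function.Injective fun k : ℕ ↦ 2 * k + 1 := fun a b h ↦ by simpa using h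
  have hindicator : HasSum ({n | Odd n}.indicator f) o := by
    refine (hinj.hasSum_iff fun n hn ↦ Set.indicator_of_notMem ?_ f).1 (hodd.congr_fun fun k ↦ ?_)
    · rintro ⟨k, rfl⟩
      exact hn ⟨k, rfl⟩
    · simp
  rw [two_mul, ← sub_sub]
  refine ((hf.sub hindicator).sub hindicator).congr_fun fun n ↦ ?_
  rcases n.even_or_odd with hn | hn
  · simp [hn.neg_one_pow, hn]
  · simp [hn.neg_one_pow, hn]

theorem hasSum_one_div_sq_add_sq {y : ℝ} (hy : y ≠ 0) :
    HasSum (fun n : ℕ ↦ 1 / (y ^ 2 + (n + 1) ^ 2))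
      ((π * (cosh (π * y) / sinh (π * y)) - 1 / y) / (2 * y)) := by
  have hyI : (y * Complex.I : ℂ) ∈ Complex.integerComplement := by
    rintro ⟨n, hn⟩
    exact hy (by simpa using (congrArg Complex.im hn).symm)
  have hyc : (y : ℂ) ≠ 0 := mod_cast hy
  have hcot := (summable_cotTerm hyI).hasSum
  rw [show ∑' n, cotTerm (y * Complex.I) n = _ from (cot_series_rep' hyI).symm] at hcot
  rw [← Complex.hasSum_ofReal]
  convert! hcot.mul_left (Complex.I / (2 * y)) using 1
  · ext n
    have hden : (y : ℂ) ^ 2 + (n + 1) ^ 2 ≠ 0 := by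
      have : y ^ 2 + ((n : ℝ) + 1) ^ 2 ≠ 0 := by positivity
      exact_mod_cast this
    have hfactor : (y * Complex.I + (n + 1)) * (y * Complex.I - (n + 1)) =
        -(y ^ 2 + (n + 1) ^ 2 : ℂ) := by
      linear_combination (y : ℂ) ^ 2 * Complex.I_sq
    rw [cotTerm_identity hyI, hfactor]
    push_cast
    field_simp
    linear_combination Complex.I_sq
  · have hsinh : Complex.sinh (π * y) ≠ 0 := by
      have : sinh (π * y) ≠ 0 := sinh_ne_zero.2 (mul_ne_zero pi_ne_zero hy)
      exact_mod_cast this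
    rw [← mul_assoc, Complex.cot_eq_cos_div_sin, Complex.cos_mul_I, Complex.sin_mul_I]
    push_cast
    field_simp [Complex.I_ne_zero]

theorem hasSum_neg_one_pow_mul_one_div_sq_add_sq {y : ℝ} (hy : y ≠ 0) :
    HasSum (fun n : ℕ ↦ (-1) ^ n * (1 / (y ^ 2 + (n + 1) ^ 2)))
      ((1 / y - π / sinh (π * y)) / (2 * y)) := by
  have hodd : HasSum (fun k : ℕ ↦ 1 / (y ^ 2 + (((2 * k + 1 : ℕ) : ℝ) + 1) ^ 2))
      (1 / 4 *
        ((π * (cosh (π * (y / 2)) / sinh (π * (y / 2))) - 1 / (y / 2)) / (2 * (y / 2)))) := by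
    refine ((hasSum_one_div_sq_add_sq (by positivity)).mul_left (1 / 4)).congr_fun fun k ↦ ?_
    push_cast
    field_simp
    ring
  convert! hasSum_neg_one_pow_mul (hasSum_one_div_sq_add_sq hy) hodd using 1
  have hsinh : sinh (π * (y / 2)) ≠ 0 := sinh_ne_zero.2 (by positivity)
  have hcosh : cosh (π * (y / 2)) ≠ 0 := (cosh_pos _).ne'
  rw [show π * y = 2 * (π * (y / 2)) by ring, sinh_two_mul, cosh_two_mul]
  field_simp [hsinh, hcosh]
  linear_combination (4 * π * y) * cosh_sq (y * π / 2)

theorem integral_exp_neg_mul_mul_cos {a : ℝ} (ha : 0 < a) (s : ℝ) :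
    ∫ t in Set.Ioi 0, exp (-a * t) * cos (s * t) = a / (a ^ 2 + s ^ 2) := by
  have hre : (-a + s * Complex.I : ℂ).re < 0 := by simpa using ha
  have h := integral_re (integrableOn_exp_mul_complex_Ioi hre 0)
  rw [integral_exp_mul_complex_Ioi hre] at h
  simpa [Complex.exp_re, Complex.div_re, Complex.normSq_apply, ← sq] using h

theorem integral_exp_neg_mul_mul_sin {a : ℝ} (ha : 0 < a) (s : ℝ) :
    ∫ t in Set.Ioi 0, exp (-a * t) * sin (s * t) = s / (a ^ 2 + s ^ 2) := by
  have hre : (-a + s * Complex.I : ℂ).re < 0 := by simpa using ha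
  have h := integral_im (integrableOn_exp_mul_complex_Ioi hre 0)
  rw [integral_exp_mul_complex_Ioi hre] at h
  simpa [Complex.exp_im, Complex.div_im, Complex.normSq_apply, ← sq, neg_div] using h

theorem integral_mul_exp_neg_mul {a : ℝ} (ha : 0 < a) :
    ∫ x in Set.Ioi 0, x * exp (-a * x) = 1 / a ^ 2 := by
  have h := integral_rpow_mul_exp_neg_mul_Ioi two_pos ha
  simpa [show (2 : ℝ) - 1 = 1 by norm_num, Gamma_two] using h

theorem integrableOn_mul_exp_neg_mul {a : ℝ} (ha : 0 < a) :
    IntegrableOn (fun x ↦ x * exp (-a * x)) (Set.Ioi 0) :=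
  .of_integral_ne_zero <| by rw [integral_mul_exp_neg_mul ha]; positivity

theorem abs_sin_mul_div_le (x t : ℝ) : |sin (x * t) / t| ≤ |x| := by
  rcases eq_or_ne t 0 with rfl | ht
  · simp
  · rw [abs_div, div_le_iff₀ (abs_pos.2 ht), ← abs_mul]
    exact abs_sin_le_abs

theorem integral_exp_neg_mul_mul_sin_div {a : ℝ} (ha : 0 < a) (x : ℝ) :
    ∫ t in Set.Ioi 0, exp (-a * t) * (sin (x * t) / t) = arctan (x / a) := by
  have hint : Integrable (Function.uncurry fun s t ↦ exp (-a * t) * cos (s * t))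
      ((volume.restrict (Set.uIoc 0 x)).prod (volume.restrict (Set.Ioi 0))) := by
    refine ((intervalIntegrable_const (c := (1 : ℝ))).def'.mul_prod
      (exp_neg_integrableOn_Ioi 0 ha)).mono (by fun_prop) (.of_forall fun p ↦ ?_)
    simpa [Function.uncurry] using
      mul_le_of_le_one_right (exp_pos (-(a * p.2))).le (abs_cos_le_one (p.1 * p.2))
  have hderiv (s : ℝ) : HasDerivAt (fun s ↦ arctan (s / a)) (a / (a ^ 2 + s ^ 2)) s := by
    convert! ((hasDerivAt_id s).div_const a).arctan using 1
    simp only [id]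
    field_simp
  calc
    _ = ∫ t in Set.Ioi 0, ∫ s in 0..x, exp (-a * t) * cos (s * t) := by
      refine setIntegral_congr_fun measurableSet_Ioi fun t (ht : 0 < t) ↦ ?_
      simp [ht.ne', div_eq_inv_mul]
    _ = ∫ s in 0..x, a / (a ^ 2 + s ^ 2) := by
      simp_rw [← intervalIntegral_integral_swap hint, integral_exp_neg_mul_mul_cos ha]
    _ = arctan (x / a) := by
      rw [intervalIntegral.integral_eq_sub_of_hasDerivAt (fun s _ ↦ hderiv s)
        (Continuous.intervalIntegrable (by fun_prop (disch := intros; positivity)) _ _)]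
      simp

theorem hasSum_neg_one_pow_mul_exp_neg {x : ℝ} (hx : 0 < x) :
    HasSum (fun n : ℕ ↦ (-1) ^ n * exp (-(n + 1) * x)) (1 / (exp x + 1)) := by
  have hlt : |-exp (-x)| < 1 := by simpa
  convert! (hasSum_geometric_of_abs_lt_one hlt).mul_left (exp (-x)) using 1
  · ext n
    rw [neg_pow (exp (-x)), ← exp_nat_mul, mul_left_comm, ← exp_add]
    ring_nf
  · rw [exp_neg]
    field_simp
    rw [sub_neg_eq_add, div_self (by positivity)]

theorem norm_exp_neg_mul_mul_sin_le (a s t : ℝ) :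
    ‖exp (-a * t) * sin (s * t)‖ ≤ ‖|s| * (t * exp (-a * t))‖ := by
  have hsin : |sin (s * t)| ≤ |s| * |t| := abs_mul s t ▸ abs_sin_le_abs
  simp only [norm_mul, norm_eq_abs, abs_abs]
  nlinarith [abs_nonneg (exp (-a * t))]

theorem integrableOn_exp_neg_mul_mul_sin {a : ℝ} (ha : 0 < a) (s : ℝ) :
    IntegrableOn (fun t ↦ exp (-a * t) * sin (s * t)) (Set.Ioi 0) :=
  Integrable.mono ((integrableOn_mul_exp_neg_mul ha).const_mul |s|) (by fun_prop)
    (.of_forall (norm_exp_neg_mul_mul_sin_le a s))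

theorem integral_norm_exp_neg_mul_mul_sin_le {a : ℝ} (ha : 0 < a) (s : ℝ) :
    ∫ t in Set.Ioi 0, ‖exp (-a * t) * sin (s * t)‖ ≤ |s| / a ^ 2 := calc
  _ ≤ ∫ t in Set.Ioi 0, |s| * (t * exp (-a * t)) :=
    setIntegral_mono_on (integrableOn_exp_neg_mul_mul_sin ha s).norm
      ((integrableOn_mul_exp_neg_mul ha).const_mul |s|) measurableSet_Ioi
      fun t (ht : 0 < t) ↦
        (norm_exp_neg_mul_mul_sin_le a s t).trans_eq (norm_of_nonneg (by positivity))
  _ = |s| / a ^ 2 := by rw [integral_const_mul, integral_mul_exp_neg_mul ha, mul_one_div]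

theorem integral_sin_div_exp_add_one {c t : ℝ} (hc : 0 < c) (ht : t ≠ 0) :
    ∫ x in Set.Ioi 0, sin (x * t) / (exp (c * x) + 1) =
      (1 / t - (π / c) / sinh (π * t / c)) / 2 := by
  let F (n : ℕ) (x : ℝ) : ℝ := (-1) ^ n * (exp (-((n + 1) * c) * x) * sin (t * x))
  have hF_int (n : ℕ) : IntegrableOn (F n) (Set.Ioi 0) :=
    (integrableOn_exp_neg_mul_mul_sin (by positivity) t).const_mul _
  have hF_norm_le (n : ℕ) :
      ∫ x in Set.Ioi 0, ‖F n x‖ ≤ |t| / c ^ 2 * (1 / ((n + 1 : ℕ) : ℝ) ^ 2) := by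
    simp only [F, norm_mul ((-1 : ℝ) ^ n), norm_pow, norm_neg, norm_one, one_pow, one_mul]
    convert! integral_norm_exp_neg_mul_mul_sin_le (a := (n + 1) * c) (by positivity) t using 1
    push_cast
    field_simp
  have hsummable : Summable fun n ↦ ∫ x in Set.Ioi 0, ‖F n x‖ :=
    .of_nonneg_of_le (fun n ↦ integral_nonneg fun x ↦ norm_nonneg _) hF_norm_le
      (((summable_nat_add_iff 1).2 (summable_one_div_nat_pow.2 one_lt_two)).mul_left _)
  have hF_tsum : ∀ x ∈ Set.Ioi (0 : ℝ), ∑' n, F n x = sin (x * t) / (exp (c * x) + 1) := by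
    intro x (hx : 0 < x)
    have h := (hasSum_neg_one_pow_mul_exp_neg (mul_pos hc hx)).mul_right (sin (x * t))
    rw [div_eq_mul_one_div, mul_comm, ← h.tsum_eq]
    simp only [F, mul_comm t x, mul_assoc, neg_mul]
  have hF_integral (n : ℕ) : ∫ x in Set.Ioi 0, F n x =
      t / c ^ 2 * ((-1) ^ n * (1 / ((t / c) ^ 2 + (n + 1) ^ 2))) := by
    rw [integral_const_mul, integral_exp_neg_mul_mul_sin (by positivity)]
    field_simp
    ring
  have hsum := hasSum_integral_of_summable_integral_norm hF_int hsummable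
  rw [setIntegral_congr_fun measurableSet_Ioi hF_tsum] at hsum
  simp only [hF_integral] at hsum
  rw [hsum.unique ((hasSum_neg_one_pow_mul_one_div_sq_add_sq (div_ne_zero ht hc.ne')).mul_left _)]
  field_simp

theorem two_mul_integral_arctan_div_exp_add_one {a : ℝ} (ha : 0 < a) :
    2 * ∫ x in Set.Ioi 0, arctan (x / a) / (exp (2 * π * x) + 1) =
      ∫ t in Set.Ioi 0, exp (-a * t) * (binetKernel t / t) := by
  let f (x t : ℝ) : ℝ := exp (-a * t) * (sin (x * t) / t) / (exp (2 * π * x) + 1)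
  have hf_int : Integrable (Function.uncurry f)
      ((volume.restrict (Set.Ioi 0)).prod (volume.restrict (Set.Ioi 0))) := by
    refine ((integrableOn_mul_exp_neg_mul two_pi_pos).mul_prod
      (exp_neg_integrableOn_Ioi 0 ha)).mono (by fun_prop) (.of_forall fun ⟨x, t⟩ ↦ ?_)
    have hinv : (exp (2 * π * x) + 1)⁻¹ ≤ exp (-(2 * π) * x) := by
      rw [neg_mul, exp_neg]
      gcongr
      simp
    simp only [Function.uncurry, f, div_eq_mul_inv (_ * _), norm_mul, norm_inv, norm_eq_abs,
      abs_exp, abs_of_pos (by positivity : 0 < exp (2 * π * x) + 1)]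
    have hsin := abs_sin_mul_div_le x t
    calc
      _ ≤ exp (-a * t) * |x| * exp (-(2 * π) * x) := by gcongr
      _ = _ := by ring
  have hf_fst (x : ℝ) :
      ∫ t in Set.Ioi 0, f x t = arctan (x / a) / (exp (2 * π * x) + 1) := by
    rw [integral_div, integral_exp_neg_mul_mul_sin_div ha]
  have hf_snd : ∀ t ∈ Set.Ioi (0 : ℝ),
      2 * ∫ x in Set.Ioi 0, f x t = exp (-a * t) * (binetKernel t / t) := by
    intro t (ht : 0 < t)
    have hf (x : ℝ) : f x t = exp (-a * t) / t * (sin (x * t) / (exp (2 * π * x) + 1)) := by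
      ring
    simp only [hf]
    rw [integral_const_mul, integral_sin_div_exp_add_one two_pi_pos ht.ne', binetKernel]
    field_simp
  simp_rw [← hf_fst]
  rw [integral_integral_swap hf_int, ← integral_const_mul]
  exact setIntegral_congr_fun measurableSet_Ioi hf_snd

theorem abs_exp_neg_mul_sub_exp_neg_mul_le {m a b t : ℝ} (ha : m ≤ a) (hb : m ≤ b) (ht : 0 ≤ t) :
    |exp (-a * t) - exp (-b * t)| ≤ |a - b| * (t * exp (-m * t)) := by
  wlog hab : a ≤ b generalizing a b
  · rw [abs_sub_comm, abs_sub_comm a]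
    exact this hb ha (le_of_not_ge hab)
  have hfactor : exp (-b * t) = exp (-a * t) * exp (-((b - a) * t)) := by
    rw [← exp_add]
    ring_nf
  have hnonneg : 0 ≤ (b - a) * t := mul_nonneg (sub_nonneg.2 hab) ht
  have hle_one : exp (-((b - a) * t)) ≤ 1 := exp_le_one_iff.2 (neg_nonpos.2 hnonneg)
  calc
    _ = exp (-a * t) * (1 - exp (-((b - a) * t))) := by
      rw [hfactor, ← mul_one_sub, abs_of_nonneg (mul_nonneg (exp_pos _).le (sub_nonneg.2 hle_one))]
    _ ≤ exp (-m * t) * ((b - a) * t) := by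
      have hone_sub := one_sub_le_exp_neg ((b - a) * t)
      gcongr
      linarith
    _ = |a - b| * (t * exp (-m * t)) := by
      rw [abs_sub_comm, abs_of_nonneg (sub_nonneg.2 hab)]
      ring

theorem abs_exp_neg_mul_sub_exp_neg_mul_div_le {m a b t : ℝ} (ha : m ≤ a) (hb : m ≤ b)
    (ht : 0 < t) : |(exp (-a * t) - exp (-b * t)) / t| ≤ |a - b| * exp (-m * t) := by
  rw [abs_div, abs_of_pos ht, div_le_iff₀ ht, mul_right_comm, mul_assoc]
  exact abs_exp_neg_mul_sub_exp_neg_mul_le ha hb ht.le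

theorem integral_exp_neg_mul_sub_exp_neg_mul_div {a b : ℝ} (ha : 0 < a) (hb : 0 < b) :
    ∫ t in Set.Ioi 0, (exp (-a * t) - exp (-b * t)) / t = log b - log a := by
  have hcont : Continuous fun t : ℝ ↦ exp (-t) := by fun_prop
  have hint : IntegrableOn (fun t ↦ (exp (-a * t) - exp (-b * t)) / t) (Set.Ioi 0) := by
    refine Integrable.mono' ((exp_neg_integrableOn_Ioi 0 (lt_min ha hb)).const_mul |a - b|)
      (Measurable.aestronglyMeasurable (by fun_prop)) ?_
    filter_upwards [ae_restrict_mem measurableSet_Ioi] with t ht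
    exact abs_exp_neg_mul_sub_exp_neg_mul_div_le (min_le_left a b) (min_le_right a b) ht
  have h := Frullani.integral_Ioi_eq (hcont.locallyIntegrable.locallyIntegrableOn _) ha hb
    (hcont.continuousWithinAt (x := 0)) tendsto_exp_neg_atTop_nhds_zero
    (by simpa [div_eq_inv_mul] using hint)
  rw [log_div hb.ne' ha.ne'] at h
  simpa [div_eq_inv_mul] using h

theorem integrable_exp_neg_mul_sub_exp_neg_mul_div_prod {m b d : ℝ} (hm : 0 < m) (hb : m ≤ b)
    (hd : m ≤ d) :
    Integrable (Function.uncurry fun s t ↦ (exp (-s * t) - exp (-b * t)) / t)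
      ((volume.restrict (Set.uIoc m d)).prod (volume.restrict (Set.Ioi 0))) := by
  have hcont : Continuous fun s ↦ |s - b| := by fun_prop
  refine ((hcont.intervalIntegrable m d).def'.mul_prod (exp_neg_integrableOn_Ioi 0 hm)).mono'
    (Measurable.aestronglyMeasurable (by fun_prop)) ?_
  rw [Measure.prod_restrict]
  filter_upwards [ae_restrict_mem (measurableSet_uIoc.prod measurableSet_Ioi)] with ⟨s, t⟩ ⟨hs, ht⟩
  rw [Set.uIoc_of_le hd] at hs
  exact abs_exp_neg_mul_sub_exp_neg_mul_div_le hs.1.le hb ht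

theorem one_sub_exp_neg_mul_binetKernel {t : ℝ} (ht : t ≠ 0) :
    (1 - exp (-t)) * binetKernel t = (1 - exp (-t)) / t - exp (-(t / 2)) := by
  have hsinh : sinh (t / 2) ≠ 0 := sinh_ne_zero.2 (by positivity)
  have hfactor : 1 - exp (-t) = exp (-(t / 2)) * (2 * sinh (t / 2)) := by
    rw [sinh_eq, mul_div_cancel₀ _ two_ne_zero, mul_sub, ← exp_add, ← exp_add,
      neg_add_cancel, exp_zero, ← neg_add, add_halves]
  rw [binetKernel, mul_sub, mul_one_div, mul_one_div]
  congr 1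
  rw [hfactor]
  field_simp

theorem binetKernel_nonneg {t : ℝ} (ht : 0 < t) : 0 ≤ binetKernel t := by
  have hle : t ≤ 2 * sinh (t / 2) := by linarith [self_le_sinh_iff.2 (half_pos ht).le]
  exact sub_nonneg.2 (one_div_le_one_div_of_le ht hle)

theorem intervalIntegral_exp_neg_mul_sub_exp_neg_mul_div (m : ℝ) {t : ℝ} (ht : t ≠ 0) :
    ∫ s in m..m + 1, (exp (-s * t) - exp (-(m + 1 / 2) * t)) / t =
      exp (-m * t) * ((1 - exp (-t)) * (binetKernel t / t)) := by
  have hexp : ∫ s in m..m + 1, exp (-s * t) = exp (-m * t) * ((1 - exp (-t)) / t) := by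
    simp_rw [neg_mul_comm _ t]
    rw [intervalIntegral.integral_comp_mul_right exp (neg_ne_zero.2 ht), integral_exp, add_one_mul,
      exp_add, smul_eq_mul]
    field_simp
    ring
  have hmid : exp (-(m + 1 / 2) * t) = exp (-m * t) * exp (-(t / 2)) := by
    rw [← exp_add]
    ring_nf
  rw [intervalIntegral.integral_div, intervalIntegral.integral_sub
    (Continuous.intervalIntegrable (by fun_prop) _ _) intervalIntegrable_const, hexp, hmid,
    ← mul_div_assoc (1 - exp (-t)), one_sub_exp_neg_mul_binetKernel ht,
    intervalIntegral.integral_const, smul_eq_mul]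
  ring

theorem integrableOn_exp_neg_mul_mul_one_sub_mul_binetKernel_div {m : ℝ} (hm : 0 < m) :
    IntegrableOn (fun t ↦ exp (-m * t) * ((1 - exp (-t)) * (binetKernel t / t))) (Set.Ioi 0) := by
  have h := integrable_exp_neg_mul_sub_exp_neg_mul_div_prod hm
    (by linarith : m ≤ m + 1 / 2) (by linarith : m ≤ m + 1)
  refine IntegrableOn.congr_fun h.integral_prod_right (fun t (ht : 0 < t) ↦ ?_) measurableSet_Ioi
  rw [← intervalIntegral_exp_neg_mul_sub_exp_neg_mul_div m ht.ne',
    intervalIntegral.integral_of_le (by linarith), Set.uIoc_of_le (by linarith)]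
  rfl

theorem integral_exp_neg_mul_mul_one_sub_mul_binetKernel_div {m : ℝ} (hm : 0 < m) :
    ∫ t in Set.Ioi 0, exp (-m * t) * ((1 - exp (-t)) * (binetKernel t / t)) =
      log (m + 1 / 2) - ∫ s in m..m + 1, log s := by
  have hprod := integrable_exp_neg_mul_sub_exp_neg_mul_div_prod hm
    (by linarith : m ≤ m + 1 / 2) (by linarith : m ≤ m + 1)
  calc
    _ = ∫ t in Set.Ioi 0, ∫ s in m..m + 1, (exp (-s * t) - exp (-(m + 1 / 2) * t)) / t :=
      setIntegral_congr_fun measurableSet_Ioi fun t (ht : 0 < t) ↦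
        (intervalIntegral_exp_neg_mul_sub_exp_neg_mul_div m ht.ne').symm
    _ = ∫ s in m..m + 1, ∫ t in Set.Ioi 0, (exp (-s * t) - exp (-(m + 1 / 2) * t)) / t :=
      (intervalIntegral_integral_swap hprod).symm
    _ = ∫ s in m..m + 1, (log (m + 1 / 2) - log s) := by
      refine intervalIntegral.integral_congr fun s hs ↦ ?_
      rw [Set.uIcc_of_le (by linarith)] at hs
      exact integral_exp_neg_mul_sub_exp_neg_mul_div (hm.trans_le hs.1) (by linarith)
    _ = log (m + 1 / 2) - ∫ s in m..m + 1, log s := by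
      rw [intervalIntegral.integral_sub intervalIntegrable_const
        intervalIntegral.intervalIntegrable_log']
      simp

theorem sum_log_midpoint_sub_integral_log {a : ℝ} (ha : 0 < a) {N : ℕ} (hN : N ≠ 0) :
    ∑ n ∈ Finset.range (N + 1), (log (a + n + 1 / 2) - ∫ s in a + n..a + n + 1, log s) =
      log (Stirling.stirlingSeq N) - BohrMollerup.logGammaSeq (a + 1 / 2) N +
        (a + N + 1) * log (1 + -(a + 1) / (a + N + 1)) + (a * log a + 1 + log 2 / 2) := by
  have hN0 : (0 : ℝ) < N := by positivity
  have hintegral : ∑ n ∈ Finset.range (N + 1), ∫ s in a + n..a + n + 1, log s =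
      (a + N + 1) * log (a + N + 1) - a * log a - (N + 1) := by
    have h := intervalIntegral.sum_integral_adjacent_intervals (a := fun n : ℕ ↦ a + n)
      (n := N + 1) (μ := volume) (f := log) fun _ _ ↦ intervalIntegral.intervalIntegrable_log'
    simp only [Nat.cast_add, Nat.cast_one, ← add_assoc, integral_log, Nat.cast_zero,
      add_zero] at h ⊢
    rw [h]
    ring
  have hratio : 1 + -(a + 1) / (a + N + 1) = N / (a + N + 1) := by
    field_simp
    ring
  simp_rw [Finset.sum_sub_distrib, hintegral, Stirling.log_stirlingSeq_formula,
    BohrMollerup.logGammaSeq, hratio, add_right_comm a _ (1 / 2)]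
  rw [log_div hN0.ne' (exp_pos 1).ne', log_div hN0.ne' (by positivity), log_exp,
    log_mul two_ne_zero hN0.ne']
  ring

theorem tendsto_sum_log_midpoint_sub_integral_log {a : ℝ} (ha : 0 < a) :
    Tendsto (fun N : ℕ ↦
        ∑ n ∈ Finset.range N, (log (a + n + 1 / 2) - ∫ s in a + n..a + n + 1, log s))
      atTop (𝓝 (a * log a - a + log (2 * π) / 2 - log (Gamma (a + 1 / 2)))) := by
  rw [← tendsto_add_atTop_iff_nat 1]
  have hstirling := Stirling.tendsto_stirlingSeq_sqrt_pi.log (by positivity)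
  have hgamma := BohrMollerup.tendsto_log_gamma (add_pos ha one_half_pos)
  have hatTop : Tendsto (fun N : ℕ ↦ a + N + 1) atTop atTop :=
    tendsto_atTop_add_const_right _ _ (tendsto_atTop_add_const_left _ _ tendsto_natCast_atTop_atTop)
  have hratio := (tendsto_mul_log_one_add_div_atTop (-(a + 1))).comp hatTop
  convert! (((hstirling.sub hgamma).add hratio).add_const (a * log a + 1 + log 2 / 2)).congr' ?_
    using 2
  · rw [log_sqrt pi_pos.le, log_mul two_ne_zero pi_ne_zero]
    ring
  · filter_upwards [eventually_ne_atTop 0] with N hN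
    exact (sum_log_midpoint_sub_integral_log ha hN).symm

theorem hasSum_exp_neg_mul_mul_one_sub (a : ℝ) {t : ℝ} (ht : 0 < t) :
    HasSum (fun n : ℕ ↦ exp (-(a + n) * t) * (1 - exp (-t))) (exp (-a * t)) := by
  have hlt : exp (-t) < 1 := by simpa
  convert! ((hasSum_geometric_of_lt_one (exp_pos _).le hlt).mul_left (exp (-a * t))).mul_right
    (1 - exp (-t)) using 1
  · ext n
    rw [← exp_nat_mul, ← exp_add]
    ring_nf
  · rw [inv_mul_cancel_right₀ (sub_pos.2 hlt).ne']

theorem integral_exp_neg_mul_mul_binetKernel_div {a : ℝ} (ha : 0 < a) :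
    ∫ t in Set.Ioi 0, exp (-a * t) * (binetKernel t / t) =
      a * log a - a + log (2 * π) / 2 - log (Gamma (a + 1 / 2)) := by
  let F (n : ℕ) (t : ℝ) : ℝ := exp (-(a + n) * t) * ((1 - exp (-t)) * (binetKernel t / t))
  have hF_int (n : ℕ) : IntegrableOn (F n) (Set.Ioi 0) :=
    integrableOn_exp_neg_mul_mul_one_sub_mul_binetKernel_div (by positivity)
  have hF_nonneg (n : ℕ) : ∀ t ∈ Set.Ioi (0 : ℝ), 0 ≤ F n t := fun t (ht : 0 < t) ↦
    mul_nonneg (exp_pos _).le <| mul_nonneg (by simpa using ht.le) <|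
      div_nonneg (binetKernel_nonneg ht) ht.le
  have hF_norm (n : ℕ) : ∫ t in Set.Ioi 0, ‖F n t‖ = ∫ t in Set.Ioi 0, F n t :=
    setIntegral_congr_fun measurableSet_Ioi fun t ht ↦ norm_of_nonneg (hF_nonneg n t ht)
  have hF_hasSum : HasSum (fun n ↦ ∫ t in Set.Ioi 0, F n t)
      (a * log a - a + log (2 * π) / 2 - log (Gamma (a + 1 / 2))) := by
    rw [hasSum_iff_tendsto_nat_of_nonneg fun n ↦
      setIntegral_nonneg measurableSet_Ioi (hF_nonneg n)]
    convert! tendsto_sum_log_midpoint_sub_integral_log ha using 4 with N n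
    exact integral_exp_neg_mul_mul_one_sub_mul_binetKernel_div (by positivity)
  have hF_tsum : ∀ t ∈ Set.Ioi (0 : ℝ), ∑' n, F n t = exp (-a * t) * (binetKernel t / t) := by
    intro t ht
    rw [← ((hasSum_exp_neg_mul_mul_one_sub a ht).mul_right (binetKernel t / t)).tsum_eq]
    simp only [F, mul_assoc]
  rw [← setIntegral_congr_fun measurableSet_Ioi hF_tsum]
  exact (hasSum_integral_of_summable_integral_norm hF_int
    (by simpa only [hF_norm] using hF_hasSum.summable)).unique hF_hasSum

theorem log_Gamma_three_halves : log (Gamma (1 + 1 / 2)) = log π / 2 - log 2 := by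
  rw [add_comm, Gamma_add_one (by norm_num), Gamma_one_half_eq, one_div_mul_eq_div,
    log_div (by positivity) two_ne_zero, log_sqrt pi_pos.le]

theorem integral_arctan_exp_add_one_general {a : ℝ} (ha : 0 < a) :
    2 * ∫ x in Set.Ioi 0, arctan (x / a) / (exp (2 * π * x) + 1) =
      a * log a - a + log (2 * π) / 2 - log (Gamma (a + 1 / 2)) :=
  (two_mul_integral_arctan_div_exp_add_one ha).trans (integral_exp_neg_mul_mul_binetKernel_div ha)

/-- 4 ∫₀^∞ arctan x/(e^{2πx}+1) dx = −2 + 3 log 2. -/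
theorem integral_arctan_exp_add_one :
    4 * (∫ x in Set.Ioi (0 : ℝ), Real.arctan x / (Real.exp (2 * π * x) + 1)) =
      -2 + 3 * Real.log 2 := by
  have h := integral_arctan_exp_add_one_general one_pos
  rw [log_Gamma_three_halves, log_mul two_ne_zero pi_ne_zero] at h
  simp only [div_one, log_one] at h
  linarith
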